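/- arXiv:1801.09072 — 7 statements merged into one kernel-verified Lean document; each statement's English description precedes it below -/
import Mathlib

section
/- Let V be a commutative quantale, F an endofunctor on the category of types, and Γ a V-relator for F. Then Γ ⊓ Γ°, the pointwise meet of Γ and its dual Γ°(α) := (Γ(α°))°, is the greatest conversive V-relator smaller than or equal to Γ: (i) Γ ⊓ Γ° is a V-relator for F and is conversive; (ii) Γ ⊓ Γ° ≤ Γ pointwise; (iii) every conversive V-relator Δ for F with Δ ≤ Γ satisfies Δ ≤ Γ ⊓ Γ°. -/
universe u v

/-- Composition of `V`-relations: `(β · α)(x, z) = ⨆ y, α x y * β y z`. -/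
def vcomp {V : Type v} [CompleteLattice V] [Mul V] {X Y Z : Type u}
    (β : Y → Z → V) (α : X → Y → V) : X → Z → V :=
  fun x z => ⨆ y, α x y * β y z

open Classical in
/-- The identity `V`-relation on `X`. -/
noncomputable def vid {V : Type v} [CompleteLattice V] [One V] (X : Type u) : X → X → V :=
  fun x x' => if x = x' then 1 else ⊥

/-- The dual of a `V`-relation. -/
def vdual {V : Type v} {X Y : Type u} (α : X → Y → V) : Y → X → V :=
  fun y x => α x y

open Classical in
/-- The graph of a function, as a `V`-relation. -/
noncomputable def vgraph {V : Type v} [CompleteLattice V] [One V] {X Y : Type u}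
    (f : X → Y) : X → Y → V :=
  fun x y => if y = f x then 1 else ⊥

/-- A `V`-relator for an endofunctor `T` (with functorial action `Tmap`): a lifting of
`V`-relations satisfying conditions (Vrel1)-(Vrel4). -/
structure IsVRelator (V : Type v) [CompleteLattice V] [CommMonoid V]
    (T : Type u → Type u) (Tmap : ∀ {X Y : Type u}, (X → Y) → T X → T Y)
    (Γ : ∀ {X Y : Type u}, (X → Y → V) → T X → T Y → V) : Prop where
  rel1 : ∀ X : Type u, vid (V := V) (T X) ≤ Γ (vid X)
  rel2 : ∀ {X Y Z : Type u} (α : X → Y → V) (β : Y → Z → V),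
      vcomp (Γ β) (Γ α) ≤ Γ (vcomp β α)
  rel3 : ∀ {X Y : Type u} (f : X → Y), vgraph (V := V) (Tmap f) ≤ Γ (vgraph f)
  rel3' : ∀ {X Y : Type u} (f : X → Y),
      vdual (vgraph (V := V) (Tmap f)) ≤ Γ (vdual (vgraph f))
  rel4 : ∀ {X Y : Type u} (α β : X → Y → V), α ≤ β → Γ α ≤ Γ β

/-- A `V`-relation lifting `Γ` is conversive if `Γ(α°) = (Γα)°`. -/
def Conversive (V : Type v)
    (T : Type u → Type u)
    (Γ : ∀ {X Y : Type u}, (X → Y → V) → T X → T Y → V) : Prop :=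
  ∀ {X Y : Type u} (α : X → Y → V), Γ (vdual α) = vdual (Γ α)

/-- `Γ ⊓ Γ°` is the greatest conversive `V`-relator smaller than or
equal to `Γ`. -/
theorem vrelator_meet_dual_greatest_conversive
    {V : Type v} [CompleteLattice V] [CommMonoid V] [IsQuantale V]
    (F : Type u → Type u)
    (Fmap : ∀ {X Y : Type u}, (X → Y) → F X → F Y)
    (Γ : ∀ {X Y : Type u}, (X → Y → V) → F X → F Y → V)
    (hΓ : IsVRelator V F (fun f => Fmap f) (fun α => Γ α)) :
    (IsVRelator V F (fun f => Fmap f) (fun α t s => Γ α t s ⊓ Γ (vdual α) s t) ∧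
      Conversive V F (fun α t s => Γ α t s ⊓ Γ (vdual α) s t)) ∧
    (∀ {X Y : Type u} (α : X → Y → V) (t : F X) (s : F Y),
      Γ α t s ⊓ Γ (vdual α) s t ≤ Γ α t s) ∧
    (∀ Δ : ∀ {X Y : Type u}, (X → Y → V) → F X → F Y → V,
      IsVRelator V F (fun f => Fmap f) (fun α => Δ α) →
      Conversive V F (fun α => Δ α) →
      (∀ {X Y : Type u} (α : X → Y → V), Δ α ≤ Γ α) →
      ∀ {X Y : Type u} (α : X → Y → V) (t : F X) (s : F Y),
        Δ α t s ≤ Γ α t s ⊓ Γ (vdual α) s t) := by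
  have dd : ∀ {X Y : Type u} (α : X → Y → V), vdual (vdual α) = α := fun _ => rfl
  have did : ∀ X : Type u, vdual (vid (V := V) X) = vid X := by
    intro X
    funext x y
    by_cases h : x = y
    · subst h; rfl
    · simp [vdual, vid, h, Ne.symm h]
  have dcomp : ∀ {X Y Z : Type u} (α : X → Y → V) (β : Y → Z → V),
      vdual (vcomp β α) = vcomp (vdual α) (vdual β) := by
    intro X Y Z α β
    funext z x
    simp only [vdual, vcomp, mul_comm]
  refine ⟨⟨⟨?_, ?_, ?_, ?_, ?_⟩, ?_⟩, ?_, ?_⟩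
  · intro X t s
    refine le_inf (hΓ.rel1 X t s) ?_
    have h := hΓ.rel1 X s t
    rw [did]
    rw [← did (F X)]
    exact h
  · intro X Y Z α β t s
    refine le_inf ?_ ?_
    · refine le_trans ?_ (hΓ.rel2 α β t s)
      exact iSup_mono fun y => mul_le_mul' inf_le_left inf_le_left
    · have h := hΓ.rel2 (vdual β) (vdual α) s t
      rw [dcomp]
      refine le_trans ?_ h
      refine iSup_mono fun y => ?_
      rw [mul_comm]
      exact mul_le_mul' inf_le_right inf_le_right
  · intro X Y f t s
    exact le_inf (hΓ.rel3 f t s) (hΓ.rel3' f s t)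
  · intro X Y f t s
    exact le_inf (hΓ.rel3' f t s) (hΓ.rel3 f s t)
  · intro X Y α β h t s
    exact inf_le_inf (hΓ.rel4 α β h t s)
      (hΓ.rel4 (vdual α) (vdual β) (fun y x => h x y) s t)
  · intro X Y α
    funext s t
    exact inf_comm _ _
  · intro X Y α t s
    exact inf_le_left
  · intro Δ _ hc hle X Y α t s
    refine le_inf (hle α t s) ?_
    have h := hle (vdual α) s t
    have e : Δ (vdual α) s t = Δ α t s := congrFun (congrFun (hc α) s) t
    rw [← e]
    exact h
end

section
/- Let X and Y be countable types, μ a probability mass function (PMF) on X, ν a PMF on Y, and α : X → Y → ℝ with 0 ≤ α(x,y) ≤ 1 for all x, y. Then: (i) the infimum defining Wα(μ,ν) is attained, i.e. there exists a coupling ω ∈ Ω(μ,ν) with ∑_{x,y} α(x,y) · ω(x,y) = Wα(μ,ν); (ii) Wα(μ,ν) equals the supremum, over all families of real numbers (a_x)_{x ∈ X} and (b_y)_{y ∈ Y} that are bounded above, satisfy a_x + b_y ≤ α(x,y) for all x, y, and for which the series ∑_x a_x · μ(x) and ∑_y b_y · ν(y) are summable, of the value ∑_x a_x · μ(x) + ∑_y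 b_y · ν(y); and (iii) this supremum is attained by some such family. -/
open scoped ENNReal

/-- `ω` is a coupling of `μ` and `ν`: a joint distribution with marginals `μ` and `ν`. -/
def IsCoupling {X Y : Type*} (μ : PMF X) (ν : PMF Y) (ω : PMF (X × Y)) : Prop :=
  (∀ x, ∑' y, ω (x, y) = μ x) ∧ ∀ y, ∑' x, ω (x, y) = ν y

/-- The transport cost `∑_{x,y} α(x,y) · ω(x,y)` of a joint distribution `ω`. -/
noncomputable def Wcost {X Y : Type*} (α : X → Y → ℝ) (ω : PMF (X × Y)) : ℝ :=
  ∑' p : X × Y, α p.1 p.2 * (ω p).toReal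

/-- The Wasserstein lifting `W α(μ, ν) = inf { Wcost α ω | ω coupling of μ, ν }`. -/
noncomputable def Wass {X Y : Type*} (α : X → Y → ℝ) (μ : PMF X) (ν : PMF Y) : ℝ :=
  sInf (Wcost α '' {ω | IsCoupling μ ν ω})

def RC {X Y : Type*} (m : X → ℝ) (n : Y → ℝ) (w : X × Y → ℝ) : Prop :=
  (∀ p, 0 ≤ w p) ∧ (∀ x, HasSum (fun y => w (x, y)) (m x)) ∧ ∀ y, HasSum (fun x => w (x, y)) (n y)

theorem fs_fst {X Y : Type*} (d : (X × Y) →₀ ℝ) (x : X) :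
    HasSum (fun y => d (x, y)) (Finsupp.mapDomain Prod.fst d x) := by
  classical
  induction d using Finsupp.induction_linear with
  | zero => simpa using hasSum_zero
  | add f g hf hg => simpa [Finsupp.mapDomain_add] using hf.add hg
  | single p r =>
    obtain ⟨x', y'⟩ := p
    rw [Finsupp.mapDomain_single]
    convert hasSum_single (f := fun y => (Finsupp.single (x', y') r) (x, y)) y' ?_ using 1
    · simp [Finsupp.single_apply]
    · intro y hy
      simp [Finsupp.single_apply, hy.symm]

theorem fs_snd {X Y : Type*} (d : (X × Y) →₀ ℝ) (y : Y) :
    HasSum (fun x => d (x, y)) (Finsupp.mapDomain Prod.snd d y) := by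
  classical
  induction d using Finsupp.induction_linear with
  | zero => simpa using hasSum_zero
  | add f g hf hg => simpa [Finsupp.mapDomain_add] using hf.add hg
  | single p r =>
    obtain ⟨x', y'⟩ := p
    rw [Finsupp.mapDomain_single]
    convert hasSum_single (f := fun x => (Finsupp.single (x', y') r) (x, y)) x' ?_ using 1
    · simp [Finsupp.single_apply]
    · intro y hy
      simp [Finsupp.single_apply, hy.symm]

theorem fs_cost {P : Type*} (c : P → ℝ) (d : P →₀ ℝ) :
    HasSum (fun p => c p * d p) (Finsupp.linearCombination ℝ c d) := by
  classical
  induction d using Finsupp.induction_linear with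
  | zero => simpa using hasSum_zero
  | add f g hf hg => simpa [mul_add] using hf.add hg
  | single p r =>
    convert hasSum_single (f := fun q => c q * (Finsupp.single p r) q) p ?_ using 1
    · simp [mul_comm]
    · intro y hy
      simp [Finsupp.single_apply, hy.symm]

theorem RC.hasSum_fst {X Y : Type*} {m : X → ℝ} {n : Y → ℝ} {w : X × Y → ℝ} (h : RC m n w)
    {a : X → ℝ} (ha : Summable fun x => a x * m x) :
    HasSum (fun p : X × Y => a p.1 * w p) (∑' x, a x * m x) := by
  have hm : ∀ x, 0 ≤ m x := fun x => (h.2.1 x).nonneg fun y => h.1 _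
  have hs : Summable (fun p : X × Y => a p.1 * w p) := by
    rw [← summable_abs_iff]
    rw [summable_prod_of_nonneg (fun p => abs_nonneg _)]
    have key : ∀ x, HasSum (fun y => |a x * w (x, y)|) |a x * m x| := by
      intro x
      have := (h.2.1 x).mul_left |a x|
      rw [abs_mul, abs_of_nonneg (hm x)]
      have e : (fun y => |a x * w (x, y)|) = fun y => |a x| * w (x, y) := by
        ext y
        rw [abs_mul, abs_of_nonneg (h.1 _)]
      rw [e]
      exact this
    refine ⟨fun x => (key x).summable, ?_⟩
    simp only [(key _).tsum_eq]
    exact ha.abs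
  have h1 := hs.hasSum.prod_fiberwise (fun x => (h.2.1 x).mul_left (a x))
  rw [h1.tsum_eq]
  exact hs.hasSum

theorem RC.swap {X Y : Type*} {m : X → ℝ} {n : Y → ℝ} {w : X × Y → ℝ} (h : RC m n w) :
    RC n m (fun p => w p.swap) := ⟨fun p => h.1 _, h.2.2, h.2.1⟩

theorem RC.hasSum_snd {X Y : Type*} {m : X → ℝ} {n : Y → ℝ} {w : X × Y → ℝ} (h : RC m n w)
    {b : Y → ℝ} (hb : Summable fun y => b y * n y) :
    HasSum (fun p : X × Y => b p.2 * w p) (∑' y, b y * n y) := by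
  have := h.swap.hasSum_fst hb
  exact (Equiv.prodComm X Y).hasSum_iff.symm.1 (by simpa [Function.comp_def] using this)

theorem RC.summable_cost {X Y : Type*} {m : X → ℝ} {n : Y → ℝ} {w : X × Y → ℝ} (h : RC m n w)
    (hm : Summable m) {α : X × Y → ℝ} (hα : ∀ p, α p ∈ Set.Icc (0 : ℝ) 1) :
    Summable (fun p => α p * w p) := by
  have h1 : Summable w := by
    have := (h.hasSum_fst (a := fun _ => 1) (by simpa using hm)).summable
    simpa using this
  exact Summable.of_nonneg_of_le (fun p => mul_nonneg (hα p).1 (h.1 p))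
    (fun p => mul_le_of_le_one_left (h.1 p) (hα p).2) h1

theorem RC.weak {X Y : Type*} {m : X → ℝ} {n : Y → ℝ} {w : X × Y → ℝ} (h : RC m n w)
    (hm : Summable m) {α : X × Y → ℝ} (hα : ∀ p, α p ∈ Set.Icc (0 : ℝ) 1)
    {a : X → ℝ} (ha : Summable fun x => a x * m x)
    {b : Y → ℝ} (hb : Summable fun y => b y * n y) (hab : ∀ x y, a x + b y ≤ α (x, y)) :
    (∑' x, a x * m x) + ∑' y, b y * n y ≤ ∑' p, α p * w p := by
  refine hasSum_le (fun p => ?_) ((h.hasSum_fst ha).add (h.hasSum_snd hb))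
    (h.summable_cost hm hα).hasSum
  have := mul_le_mul_of_nonneg_right (hab p.1 p.2) (h.1 p)
  simp only [Prod.mk.eta] at this
  linarith

theorem RC.strong {X Y : Type*} {m : X → ℝ} {n : Y → ℝ} {w : X × Y → ℝ} (h : RC m n w)
    {α : X × Y → ℝ}
    {a : X → ℝ} (ha : Summable fun x => a x * m x)
    {b : Y → ℝ} (hb : Summable fun y => b y * n y)
    (hab : ∀ x y, w (x, y) ≠ 0 → a x + b y = α (x, y)) :
    ∑' p, α p * w p = (∑' x, a x * m x) + ∑' y, b y * n y := by
  rw [← ((h.hasSum_fst ha).add (h.hasSum_snd hb)).tsum_eq]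
  congr 1
  ext p
  by_cases hp : w p = 0
  · simp [hp]
  · rw [← hab p.1 p.2 hp]; ring

theorem RC.le_fst {X Y : Type*} {m : X → ℝ} {n : Y → ℝ} {w : X × Y → ℝ} (h : RC m n w) (p : X × Y) :
    w p ≤ m p.1 := le_hasSum (h.2.1 p.1) p.2 fun y _ => h.1 _

theorem RC.le_snd {X Y : Type*} {m : X → ℝ} {n : Y → ℝ} {w : X × Y → ℝ} (h : RC m n w) (p : X × Y) :
    w p ≤ n p.2 := le_hasSum (h.2.2 p.2) p.1 fun y _ => h.1 _

theorem RC_compact {X Y : Type*} {m : X → ℝ} {n : Y → ℝ} (hm : Summable m) (hn : Summable n) :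
    IsCompact {w | RC m n w} := by
  set B : Set (X × Y → ℝ) := Set.univ.pi fun p => Set.Icc 0 (min (m p.1) (n p.2)) with hB
  have hBc : IsCompact B := isCompact_univ_pi fun p => isCompact_Icc
  have hBcl : IsClosed B := isClosed_set_pi fun p _ => isClosed_Icc
  have hB' : ∀ w ∈ B, ∀ p, 0 ≤ w p ∧ w p ≤ m p.1 ∧ w p ≤ n p.2 := by
    intro w hw p
    have := hw p trivial
    simpa using this
  have e : {w | RC m n w} = B ∩ ((⋂ x, B ∩ (fun w => ∑' y, w (x, y)) ⁻¹' {m x}) ∩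
      ⋂ y, B ∩ (fun w => ∑' x, w (x, y)) ⁻¹' {n y}) := by
    ext w
    simp only [Set.mem_inter_iff, Set.mem_iInter, Set.mem_setOf_eq, Set.mem_preimage,
      Set.mem_singleton_iff]
    constructor
    · intro h
      have hw : w ∈ B := fun p _ => ⟨h.1 p, le_min (h.le_fst p) (h.le_snd p)⟩
      exact ⟨hw, fun x => ⟨hw, (h.2.1 x).tsum_eq⟩, fun y => ⟨hw, (h.2.2 y).tsum_eq⟩⟩
    · rintro ⟨hw, h1, h2⟩
      refine ⟨fun p => (hB' w hw p).1, fun x => ?_, fun y => ?_⟩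
      · rw [← (h1 x).2]
        exact (Summable.of_nonneg_of_le (fun y => (hB' w hw _).1)
          (fun y => (hB' w hw (x, y)).2.2) hn).hasSum
      · rw [← (h2 y).2]
        exact (Summable.of_nonneg_of_le (fun x => (hB' w hw _).1)
          (fun x => (hB' w hw (x, y)).2.1) hm).hasSum
  rw [e]
  refine hBc.inter_right (IsClosed.inter (isClosed_iInter fun x => ?_) (isClosed_iInter fun y => ?_))
  · refine ContinuousOn.preimage_isClosed_of_isClosed ?_ hBcl isClosed_singleton
    refine continuousOn_tsum (fun y => (continuous_apply _).continuousOn) hn ?_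
    intro y w hw
    rw [Real.norm_of_nonneg (hB' w hw _).1]
    exact (hB' w hw (x, y)).2.2
  · refine ContinuousOn.preimage_isClosed_of_isClosed ?_ hBcl isClosed_singleton
    refine continuousOn_tsum (fun y => (continuous_apply _).continuousOn) hm ?_
    intro x w hw
    rw [Real.norm_of_nonneg (hB' w hw _).1]
    exact (hB' w hw (x, y)).2.1

theorem RC_min {X Y : Type*} {m : X → ℝ} {n : Y → ℝ} (hm : Summable m) (hn : Summable n)
    {α : X × Y → ℝ} (hα : ∀ p, α p ∈ Set.Icc (0 : ℝ) 1) (hne : ∃ w, RC m n w) :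
    ∃ w, RC m n w ∧ ∀ w', RC m n w' → ∑' p, α p * w p ≤ ∑' p, α p * w' p := by
  have hc : ContinuousOn (fun w : X × Y → ℝ => ∑' x, ∑' y, α (x, y) * w (x, y)) {w | RC m n w} := by
    refine continuousOn_tsum (fun x => ?_) hm ?_
    · refine continuousOn_tsum
        (fun y => (continuous_const.mul (continuous_apply (x, y))).continuousOn) hn ?_
      intro y w hw
      rw [Real.norm_of_nonneg (mul_nonneg (hα _).1 (hw.1 _))]
      exact (mul_le_of_le_one_left (hw.1 _) (hα _).2).trans (hw.le_snd (x, y))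
    · intro x w hw
      rw [Real.norm_of_nonneg (tsum_nonneg fun y => mul_nonneg (hα _).1 (hw.1 _))]
      rw [← (hw.2.1 x).tsum_eq]
      have hle : ∀ y, α (x, y) * w (x, y) ≤ w (x, y) :=
        fun y => mul_le_of_le_one_left (hw.1 _) (hα _).2
      exact Summable.tsum_le_tsum hle (Summable.of_nonneg_of_le
        (fun y => mul_nonneg (hα _).1 (hw.1 _)) hle (hw.2.1 x).summable) (hw.2.1 x).summable
  obtain ⟨w, hw, hmin⟩ := (RC_compact hm hn).exists_isMinOn hne hc
  refine ⟨w, hw, fun w' hw' => ?_⟩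
  rw [(hw.summable_cost hm hα).tsum_prod, (RC.summable_cost hw' hm hα).tsum_prod]
  exact hmin hw'

theorem RC.opt {X Y : Type*} {m : X → ℝ} {n : Y → ℝ} {w : X × Y → ℝ} (h : RC m n w)
    (hm : Summable m) {α : X × Y → ℝ} (hα : ∀ p, α p ∈ Set.Icc (0 : ℝ) 1)
    (hmin : ∀ w', RC m n w' → ∑' p, α p * w p ≤ ∑' p, α p * w' p)
    (d : (X × Y) →₀ ℝ) (hd : ∀ p, w p = 0 → 0 ≤ d p) (h1 : Finsupp.mapDomain Prod.fst d = 0)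
    (h2 : Finsupp.mapDomain Prod.snd d = 0) : 0 ≤ Finsupp.linearCombination ℝ α d := by
  have hex : ∃ ε : ℝ, 0 < ε ∧ ∀ p, 0 ≤ w p + ε * d p := by
    have : ∀ᶠ ε in nhdsWithin (0 : ℝ) (Set.Ioi 0), ∀ p ∈ d.support, 0 ≤ w p + ε * d p := by
      rw [Filter.eventually_all_finset]
      intro p _
      rcases (h.1 p).eq_or_lt with hp | hp
      · filter_upwards [self_mem_nhdsWithin] with ε hε
        rw [← hp, zero_add]
        exact mul_nonneg (le_of_lt hε) (hd p hp.symm)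
      · have hcont : Continuous fun ε : ℝ => w p + ε * d p := by fun_prop
        have : ∀ᶠ ε in nhds (0 : ℝ), 0 < w p + ε * d p :=
          hcont.continuousAt.eventually (lt_mem_nhds (by simpa using hp))
        exact (this.filter_mono nhdsWithin_le_nhds).mono fun _ h => h.le
    obtain ⟨ε, hε, hpos⟩ := (this.and self_mem_nhdsWithin).exists
    refine ⟨ε, hpos, fun p => ?_⟩
    by_cases hp : p ∈ d.support
    · exact hε p hp
    · rw [Finsupp.notMem_support_iff.1 hp]; simpa using h.1 p
  obtain ⟨ε, hε, hpos⟩ := hex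
  have hw' : RC m n (fun p => w p + ε * d p) := by
    refine ⟨hpos, fun x => ?_, fun y => ?_⟩
    · have := (h.2.1 x).add ((fs_fst d x).mul_left ε)
      simpa [h1] using this
    · have := (h.2.2 y).add ((fs_snd d y).mul_left ε)
      simpa [h2] using this
  have h3 := hmin _ hw'
  have h4 := (h.summable_cost hm hα).hasSum.add ((fs_cost α d).mul_left ε)
  have h5 : ∑' p, α p * (w p + ε * d p) =
      ∑' p, α p * w p + ε * Finsupp.linearCombination ℝ α d := by
    rw [← h4.tsum_eq]
    congr 1
    ext p
    ring
  rw [h5] at h3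
  have : 0 ≤ ε * Finsupp.linearCombination ℝ α d := by linarith
  exact nonneg_of_mul_nonneg_right this hε

theorem potentials {X Y : Type*} (S : Set (X × Y)) (hS : S.Nonempty)
    {α : X × Y → ℝ} (hα : ∀ p, α p ∈ Set.Icc (0 : ℝ) 1)
    (hopt : ∀ d : (X × Y) →₀ ℝ, (∀ p, p ∉ S → 0 ≤ d p) → Finsupp.mapDomain Prod.fst d = 0 →
      Finsupp.mapDomain Prod.snd d = 0 → 0 ≤ Finsupp.linearCombination ℝ α d) :
    ∃ (a : X → ℝ) (b : Y → ℝ), (∀ x, |a x| ≤ 3) ∧ (∀ y, |b y| ≤ 3) ∧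
      (∀ x y, a x + b y ≤ α (x, y)) ∧ ∀ x y, (x, y) ∈ S → a x + b y = α (x, y) := by
  classical
  obtain ⟨⟨x0, y0⟩, h0⟩ := hS
  haveI : Nonempty X := ⟨x0⟩
  let D : X → Set ((X × Y) →₀ ℝ) := fun x => {d | (∀ p, p ∉ S → 0 ≤ d p) ∧
    Finsupp.mapDomain Prod.fst d = Finsupp.single x 1 - Finsupp.single x0 1 ∧
    Finsupp.mapDomain Prod.snd d = 0}
  have step : ∀ x x' y d, (x, y) ∈ S → d ∈ D x →
      d + Finsupp.single (x', y) 1 - Finsupp.single (x, y) 1 ∈ D x' := by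
    rintro x x' y d hxy ⟨hd0, hd1, hd2⟩
    refine ⟨fun p hp => ?_, ?_, ?_⟩
    · have : (x, y) ≠ p := fun h => hp (h ▸ hxy)
      have h1 := hd0 p hp
      have h2 : 0 ≤ (Finsupp.single (x', y) (1 : ℝ)) p := by
        rw [Finsupp.single_apply]; split_ifs <;> norm_num
      simp only [Finsupp.coe_sub, Finsupp.coe_add, Pi.sub_apply, Pi.add_apply,
        Finsupp.single_eq_of_ne' this]
      linarith
    · rw [sub_eq_add_neg, ← Finsupp.single_neg, Finsupp.mapDomain_add, Finsupp.mapDomain_add, hd1,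
        Finsupp.mapDomain_single, Finsupp.mapDomain_single, Finsupp.single_neg]
      abel
    · rw [sub_eq_add_neg, ← Finsupp.single_neg, Finsupp.mapDomain_add, Finsupp.mapDomain_add, hd2,
        Finsupp.mapDomain_single, Finsupp.mapDomain_single, Finsupp.single_neg]
      abel
  let c := Finsupp.linearCombination ℝ α
  have cstep : ∀ x x' y d, c (d + Finsupp.single (x', y) 1 - Finsupp.single (x, y) 1) =
      c d + α (x', y) - α (x, y) := by
    intro x x' y d
    simp [c, Finsupp.linearCombination_single]
  have hz : (0 : (X × Y) →₀ ℝ) ∈ D x0 := by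
    refine ⟨fun p _ => le_rfl, by simp, by simp⟩
  have hlow : ∀ x y, (x, y) ∈ S → ∀ d ∈ D x, -1 ≤ c d := by
    intro x y hxy d hd
    obtain ⟨e0, e1, e2⟩ := step x x0 y d hxy hd
    have := hopt _ e0 (by simpa using e1) e2
    change 0 ≤ c _ at this
    rw [cstep] at this
    linarith [(hα (x0, y)).2, (hα (x, y)).1]
  let a : X → ℝ := fun x => if ∃ y, (x, y) ∈ S then sInf (c '' D x) else -2
  have hbdd : ∀ x y, (x, y) ∈ S → BddBelow (c '' D x) := by
    intro x y hxy
    refine ⟨-1, ?_⟩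
    rintro _ ⟨d, hd, rfl⟩
    exact hlow x y hxy d hd
  have hne : ∀ x, (c '' D x).Nonempty := fun x => ⟨_, _, step x0 x y0 0 h0 hz, rfl⟩
  have ha1 : ∀ x, a x ≤ 1 := by
    intro x
    by_cases hx : ∃ y, (x, y) ∈ S
    · simp only [a, if_pos hx]
      obtain ⟨y, hxy⟩ := hx
      refine (csInf_le (hbdd x y hxy) ⟨_, step x0 x y0 0 h0 hz, rfl⟩).trans ?_
      rw [cstep, map_zero]
      linarith [(hα (x, y0)).2, (hα (x0, y0)).1]
    · simp only [a, if_neg hx]; norm_num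
  have haS : ∀ x y, (x, y) ∈ S → -1 ≤ a x := by
    intro x y hxy
    simp only [a, if_pos (⟨y, hxy⟩ : ∃ y, (x, y) ∈ S)]
    refine le_csInf (hne x) ?_
    rintro _ ⟨d, hd, rfl⟩
    exact hlow x y hxy d hd
  have ha2 : ∀ x, -2 ≤ a x := by
    intro x
    by_cases hx : ∃ y, (x, y) ∈ S
    · obtain ⟨y, hxy⟩ := hx
      linarith [haS x y hxy]
    · simp only [a, if_neg hx]; norm_num
  have hkey : ∀ x y x', (x, y) ∈ S → α (x, y) - a x ≤ α (x', y) - a x' := by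
    intro x y x' hxy
    by_cases hx : ∃ y, (x', y) ∈ S
    · obtain ⟨y', hxy'⟩ := hx
      have : a x' - α (x', y) + α (x, y) ≤ a x := by
        simp only [a, if_pos (⟨y, hxy⟩ : ∃ y, (x, y) ∈ S), if_pos (⟨y', hxy'⟩ : ∃ y, (x', y) ∈ S)]
        refine le_csInf (hne x) ?_
        rintro _ ⟨d, hd, rfl⟩
        have := csInf_le (hbdd x' y' hxy') ⟨_, step x x' y d hxy hd, rfl⟩
        rw [cstep] at this
        linarith
      linarith
    · have h1 : a x' = -2 := by simp only [a, if_neg hx]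
      linarith [haS x y hxy, (hα (x, y)).2, (hα (x', y)).1]
  have hbb : ∀ y, BddBelow (Set.range fun x => α (x, y) - a x) := by
    intro y
    refine ⟨-1, ?_⟩
    rintro _ ⟨x, rfl⟩
    change -1 ≤ α (x, y) - a x
    linarith [ha1 x, (hα (x, y)).1]
  refine ⟨a, fun y => ⨅ x, (α (x, y) - a x), fun x => ?_, fun y => ?_, fun x y => ?_, fun x y hxy => ?_⟩
  · rw [abs_le]; constructor <;> linarith [ha1 x, ha2 x]
  · rw [abs_le]
    constructor
    · refine le_ciInf fun x => ?_
      linarith [ha1 x, (hα (x, y)).1]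
    · refine (ciInf_le (hbb y) x0).trans ?_
      linarith [ha2 x0, haS x0 y0 h0, (hα (x0, y)).2]
  · linarith [ciInf_le (hbb y) x]
  · have h1 := ciInf_le (hbb y) x
    have h2 : α (x, y) - a x ≤ ⨅ x', (α (x', y) - a x') := le_ciInf fun x' => hkey x y x' hxy
    linarith

theorem pmf_real {X : Type*} (μ : PMF X) : HasSum (fun x => (μ x).toReal) 1 := by
  have := ENNReal.hasSum_toReal (f := μ) (by simp [μ.tsum_coe])
  rwa [← ENNReal.tsum_toReal_eq μ.apply_ne_top, μ.tsum_coe, ENNReal.toReal_one] at this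

theorem IsCoupling.rc {X Y : Type*} {μ : PMF X} {ν : PMF Y} {ω : PMF (X × Y)}
    (h : IsCoupling μ ν ω) :
    RC (fun x => (μ x).toReal) (fun y => (ν y).toReal) (fun p => (ω p).toReal) := by
  refine ⟨fun p => ENNReal.toReal_nonneg, fun x => ?_, fun y => ?_⟩
  · have := ENNReal.hasSum_toReal (f := fun y => ω (x, y)) (by rw [h.1 x]; exact μ.apply_ne_top x)
    rwa [← ENNReal.tsum_toReal_eq (fun y => ω.apply_ne_top _), h.1 x] at this
  · have := ENNReal.hasSum_toReal (f := fun x => ω (x, y)) (by rw [h.2 y]; exact ν.apply_ne_top y)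
    rwa [← ENNReal.tsum_toReal_eq (fun y => ω.apply_ne_top _), h.2 y] at this

theorem RC.toPMF {X Y : Type*} {μ : PMF X} {ν : PMF Y} {w : X × Y → ℝ}
    (h : RC (fun x => (μ x).toReal) (fun y => (ν y).toReal) w) :
    ∃ ω : PMF (X × Y), IsCoupling μ ν ω ∧ ∀ p, (ω p).toReal = w p := by
  have h1 : ∀ x, ∑' y, ENNReal.ofReal (w (x, y)) = μ x := by
    intro x
    rw [← ENNReal.ofReal_tsum_of_nonneg (fun y => h.1 _) (h.2.1 x).summable, (h.2.1 x).tsum_eq,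
      ENNReal.ofReal_toReal (μ.apply_ne_top x)]
  have h2 : ∀ y, ∑' x, ENNReal.ofReal (w (x, y)) = ν y := by
    intro y
    rw [← ENNReal.ofReal_tsum_of_nonneg (fun y => h.1 _) (h.2.2 y).summable, (h.2.2 y).tsum_eq,
      ENNReal.ofReal_toReal (ν.apply_ne_top y)]
  have h3 : ∑' p, ENNReal.ofReal (w p) = 1 := by
    rw [← μ.tsum_coe]
    simp only [← h1]
    exact ENNReal.tsum_prod (f := fun x y => ENNReal.ofReal (w (x, y)))
  refine ⟨⟨fun p => ENNReal.ofReal (w p), h3 ▸ ENNReal.summable.hasSum⟩, ⟨h1, h2⟩, fun p => ?_⟩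
  exact ENNReal.toReal_ofReal (h.1 p)

/-- duality for the Wasserstein lifting on countable types:
(i) the infimum defining `W α(μ,ν)` is attained by some coupling; (ii) `W α(μ,ν)` equals
the supremum of the dual transportation problem; (iii) that supremum is attained. -/
theorem wasserstein_duality {X Y : Type*} [Countable X] [Countable Y]
    (μ : PMF X) (ν : PMF Y) (α : X → Y → ℝ)
    (hα : ∀ x y, α x y ∈ Set.Icc (0 : ℝ) 1) :
    (∃ ω, IsCoupling μ ν ω ∧ Wcost α ω = Wass α μ ν) ∧
    Wass α μ ν = sSup {c : ℝ | ∃ (a : X → ℝ) (b : Y → ℝ),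
        BddAbove (Set.range a) ∧ BddAbove (Set.range b) ∧
        (∀ x y, a x + b y ≤ α x y) ∧
        Summable (fun x => a x * (μ x).toReal) ∧
        Summable (fun y => b y * (ν y).toReal) ∧
        c = (∑' x, a x * (μ x).toReal) + ∑' y, b y * (ν y).toReal} ∧
    ∃ (a : X → ℝ) (b : Y → ℝ),
        BddAbove (Set.range a) ∧ BddAbove (Set.range b) ∧
        (∀ x y, a x + b y ≤ α x y) ∧
        Summable (fun x => a x * (μ x).toReal) ∧
        Summable (fun y => b y * (ν y).toReal) ∧
        Wass α μ ν = (∑' x, a x * (μ x).toReal) + ∑' y, b y * (ν y).toReal := by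
  have hm := pmf_real μ
  have hn := pmf_real ν
  have hα' : ∀ p : X × Y, (fun p : X × Y => α p.1 p.2) p ∈ Set.Icc (0 : ℝ) 1 := fun p => hα _ _
  have hne : ∃ w, RC (fun x => (μ x).toReal) (fun y => (ν y).toReal) w := by
    refine ⟨fun p => (μ p.1).toReal * (ν p.2).toReal, fun p => by positivity, fun x => ?_, fun y => ?_⟩
    · simpa using hn.mul_left (μ x).toReal
    · simpa using hm.mul_right (ν y).toReal
  obtain ⟨w, hw, hmin⟩ := RC_min hm.summable hn.summable hα' hne
  obtain ⟨ω, hω, hωw⟩ := hw.toPMF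
  have hcost : Wcost α ω = ∑' p : X × Y, α p.1 p.2 * w p := by simp only [Wcost, hωw]
  have hW : Wcost α ω = Wass α μ ν := by
    symm
    refine IsLeast.csInf_eq ⟨⟨ω, hω, rfl⟩, ?_⟩
    rintro _ ⟨ω', hω', rfl⟩
    rw [hcost]
    exact hmin _ hω'.rc
  have hS : {p | w p ≠ 0}.Nonempty := by
    by_contra hemp
    have h0 : ∀ p, w p = 0 := by
      intro p
      by_contra hp
      exact hemp ⟨p, hp⟩
    have h1 : ∀ x, (μ x).toReal = 0 := by
      intro x
      have := hw.2.1 x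
      simp only [h0] at this
      exact this.unique hasSum_zero
    simp only [h1] at hm
    exact zero_ne_one (hasSum_zero.unique hm)
  obtain ⟨a, b, ha, hb, hab, heq⟩ := potentials {p | w p ≠ 0} hS hα' (fun d hd h1 h2 =>
    hw.opt hm.summable hα' hmin d (fun p hp => hd p (by simpa using hp)) h1 h2)
  have hsa : Summable (fun x => a x * (μ x).toReal) := by
    refine Summable.of_norm_bounded (hm.summable.mul_left 3) fun x => ?_
    rw [norm_mul, Real.norm_eq_abs, Real.norm_of_nonneg ENNReal.toReal_nonneg]
    exact mul_le_mul_of_nonneg_right (ha x) ENNReal.toReal_nonneg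
  have hsb : Summable (fun y => b y * (ν y).toReal) := by
    refine Summable.of_norm_bounded (hn.summable.mul_left 3) fun x => ?_
    rw [norm_mul, Real.norm_eq_abs, Real.norm_of_nonneg ENNReal.toReal_nonneg]
    exact mul_le_mul_of_nonneg_right (hb x) ENNReal.toReal_nonneg
  have hba : BddAbove (Set.range a) := ⟨3, by rintro _ ⟨x, rfl⟩; exact (le_abs_self _).trans (ha x)⟩
  have hbb : BddAbove (Set.range b) := ⟨3, by rintro _ ⟨x, rfl⟩; exact (le_abs_self _).trans (hb x)⟩
  have hval : Wass α μ ν = (∑' x, a x * (μ x).toReal) + ∑' y, b y * (ν y).toReal := by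
    rw [← hW, hcost]
    exact hw.strong hsa hsb heq
  refine ⟨⟨ω, hω, hW⟩, ?_, a, b, hba, hbb, hab, hsa, hsb, hval⟩
  symm
  refine IsGreatest.csSup_eq ⟨⟨a, b, hba, hbb, hab, hsa, hsb, hval⟩, ?_⟩
  rintro _ ⟨a', b', -, -, hab', hsa', hsb', rfl⟩
  rw [← hW, hcost]
  exact hw.weak hm.summable hα' hsa' hsb' hab'
end

section
/- Let X, Y, Z be countable types, α : X → Y → ℝ and β : Y → Z → ℝ with values in [0,1], and define their composition in the unit interval quantale by (β · α)(x, z) = inf_y min(α(x, y) + β(y, z), 1). Then for all PMFs μ on X, ν on Y, and ρ on Z: W(β · α)(μ, ρ) ≤ Wα(μ, ν) + Wβ(ν, ρ). (This is the composition law Wβ · Wα ≤ W(β · α) of V-relators, instantiated to the Wasserstein lifting.) -/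
open scoped ENNReal

/-- extended nonnegative cost -/
noncomputable def ecost {X Y : Type*} (α : X → Y → ℝ) (ω : PMF (X × Y)) : ℝ≥0∞ :=
  ∑' x, ∑' y, ENNReal.ofReal (α x y) * ω (x, y)

theorem ecost_le_one {X Y : Type*} (α : X → Y → ℝ)
    (hα : ∀ x y, α x y ∈ Set.Icc (0 : ℝ) 1) (ω : PMF (X × Y)) : ecost α ω ≤ 1 := by
  rw [← ω.tsum_coe, ENNReal.tsum_prod']
  unfold ecost
  refine ENNReal.tsum_le_tsum fun x => ENNReal.tsum_le_tsum fun y => ?_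
  calc _ ≤ 1 * ω (x, y) := by
        gcongr
        exact ENNReal.ofReal_le_one.2 (hα x y).2
    _ = _ := one_mul _

theorem wcost_eq {X Y : Type*} (α : X → Y → ℝ)
    (hα : ∀ x y, α x y ∈ Set.Icc (0 : ℝ) 1) (ω : PMF (X × Y)) :
    Wcost α ω = (ecost α ω).toReal := by
  unfold Wcost ecost
  rw [← ENNReal.tsum_prod (f := fun x y => ENNReal.ofReal (α x y) * ω (x, y)),
    ENNReal.tsum_toReal_eq]
  · refine tsum_congr fun p => ?_
    rw [ENNReal.toReal_mul, ENNReal.toReal_ofReal (hα _ _).1]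
  · intro p
    exact ENNReal.mul_ne_top ENNReal.ofReal_ne_top (ω.apply_ne_top _)

theorem coupling_exists {X Y : Type*} (μ : PMF X) (ν : PMF Y) :
    ∃ ω, IsCoupling μ ν ω := by
  refine ⟨⟨fun p => μ p.1 * ν p.2, ?_⟩, ?_, ?_⟩
  · rw [ENNReal.summable.hasSum_iff, ENNReal.tsum_prod']
    simp [ENNReal.tsum_mul_left, PMF.tsum_coe]
  · intro x
    change ∑' y, μ x * ν y = _
    simp [ENNReal.tsum_mul_left, PMF.tsum_coe]
  · intro y
    change ∑' x, μ x * ν y = _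
    simp [ENNReal.tsum_mul_right, PMF.tsum_coe]

theorem glue {X Y Z : Type*} (μ : PMF X) (ν : PMF Y) (ρ : PMF Z)
    (a : PMF (X × Y)) (b : PMF (Y × Z)) (ha : IsCoupling μ ν a) (hb : IsCoupling ν ρ b) :
    ∃ τ : X → Y → Z → ℝ≥0∞, (∀ x y, ∑' z, τ x y z = a (x, y)) ∧
      (∀ y z, ∑' x, τ x y z = b (y, z)) := by
  refine ⟨fun x y z => a (x, y) * b (y, z) * (ν y)⁻¹, ?_, ?_⟩
  · intro x y
    rw [ENNReal.tsum_mul_right, ENNReal.tsum_mul_left, hb.1 y, mul_assoc]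
    by_cases h : ν y = 0
    · have : a (x, y) = 0 := by
        have h2 := ha.2 y
        rw [h, ENNReal.tsum_eq_zero] at h2
        exact h2 x
      simp [this]
    · rw [ENNReal.mul_inv_cancel h (ν.apply_ne_top _), mul_one]
  · intro y z
    rw [ENNReal.tsum_mul_right, ENNReal.tsum_mul_right, ha.2 y, mul_right_comm]
    by_cases h : ν y = 0
    · have : b (y, z) = 0 := by
        have h2 := hb.1 y
        rw [h, ENNReal.tsum_eq_zero] at h2
        exact h2 z
      simp [this]
    · rw [ENNReal.mul_inv_cancel h (ν.apply_ne_top _), one_mul]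

theorem key {X Y Z : Type*} (α : X → Y → ℝ) (β : Y → Z → ℝ) (γ : X → Z → ℝ)
    (hα : ∀ x y, α x y ∈ Set.Icc (0 : ℝ) 1) (hβ : ∀ y z, β y z ∈ Set.Icc (0 : ℝ) 1)
    (hγ : ∀ x y z, γ x z ≤ α x y + β y z)
    (μ : PMF X) (ν : PMF Y) (ρ : PMF Z)
    (a : PMF (X × Y)) (b : PMF (Y × Z)) (ha : IsCoupling μ ν a) (hb : IsCoupling ν ρ b) :
    ∃ ω, IsCoupling μ ρ ω ∧ ecost γ ω ≤ ecost α a + ecost β b := by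
  obtain ⟨τ, h1, h2⟩ := glue μ ν ρ a b ha hb
  have m1 : ∀ x, ∑' z, ∑' y, τ x y z = μ x := by
    intro x
    rw [ENNReal.tsum_comm]
    simp_rw [h1]
    exact ha.1 x
  have m2 : ∀ z, ∑' x, ∑' y, τ x y z = ρ z := by
    intro z
    rw [ENNReal.tsum_comm]
    simp_rw [h2]
    exact hb.2 z
  refine ⟨⟨fun p => ∑' y, τ p.1 y p.2, ?_⟩, ⟨m1, m2⟩, ?_⟩
  · rw [ENNReal.summable.hasSum_iff, ENNReal.tsum_prod']
    simp only [m1, PMF.tsum_coe]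
  · change ∑' x, ∑' z, ENNReal.ofReal (γ x z) * ∑' y, τ x y z ≤ _
    have e1 : ecost α a = ∑' x, ∑' z, ∑' y, ENNReal.ofReal (α x y) * τ x y z := by
      unfold ecost
      refine tsum_congr fun x => ?_
      rw [ENNReal.tsum_comm]
      refine tsum_congr fun y => ?_
      rw [ENNReal.tsum_mul_left, h1]
    have e2 : ecost β b = ∑' x, ∑' z, ∑' y, ENNReal.ofReal (β y z) * τ x y z := by
      unfold ecost
      rw [ENNReal.tsum_comm, ENNReal.tsum_comm (f := fun x z => ∑' y, ENNReal.ofReal (β y z) * τ x y z)]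
      refine tsum_congr fun z => ?_
      rw [ENNReal.tsum_comm (f := fun x y => ENNReal.ofReal (β y z) * τ x y z)]
      refine tsum_congr fun y => ?_
      rw [ENNReal.tsum_mul_left, h2]
    rw [e1, e2]
    simp_rw [← ENNReal.tsum_add, ← ENNReal.tsum_mul_left, ← add_mul]
    refine ENNReal.tsum_le_tsum fun x => ENNReal.tsum_le_tsum fun z =>
      ENNReal.tsum_le_tsum fun y => ?_
    gcongr
    rw [← ENNReal.ofReal_add (hα _ _).1 (hβ _ _).1]
    exact ENNReal.ofReal_le_ofReal (hγ _ _ _)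

/-- the Wasserstein lifting satisfies the composition law of `V`-relators for
the unit interval quantale: `W(β · α)(μ, ρ) ≤ Wα(μ, ν) + Wβ(ν, ρ)`, where
`(β · α)(x, z) = ⨅ y, min (α x y + β y z) 1`. -/
theorem wasserstein_comp {X Y Z : Type*} [Countable X] [Countable Y] [Countable Z]
    (α : X → Y → ℝ) (β : Y → Z → ℝ)
    (hα : ∀ x y, α x y ∈ Set.Icc (0 : ℝ) 1) (hβ : ∀ y z, β y z ∈ Set.Icc (0 : ℝ) 1)
    (μ : PMF X) (ν : PMF Y) (ρ : PMF Z) :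
    Wass (fun x z => ⨅ y, min (α x y + β y z) 1) μ ρ ≤ Wass α μ ν + Wass β ν ρ := by
  have hb0 : ∀ x z, BddBelow (Set.range fun y => min (α x y + β y z) 1) := by
    intro x z
    refine ⟨0, ?_⟩
    rintro _ ⟨y, rfl⟩
    exact le_min (add_nonneg (hα x y).1 (hβ y z).1) zero_le_one
  obtain ⟨y0, -⟩ := ν.support_nonempty
  have hγ : ∀ x z, (⨅ y, min (α x y + β y z) 1) ∈ Set.Icc (0 : ℝ) 1 := by
    intro x z
    refine ⟨Real.iInf_nonneg fun y =>
      le_min (add_nonneg (hα x y).1 (hβ y z).1) zero_le_one, ?_⟩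
    exact (ciInf_le (hb0 x z) y0).trans (min_le_right _ _)
  have main : ∀ a b, IsCoupling μ ν a → IsCoupling ν ρ b →
      Wass (fun x z => ⨅ y, min (α x y + β y z) 1) μ ρ ≤ Wcost α a + Wcost β b := by
    intro a b ha hb
    obtain ⟨ω, hω, hle⟩ := key α β (fun x z => ⨅ y, min (α x y + β y z) 1) hα hβ
      (fun x y z => (ciInf_le (hb0 x z) y).trans (min_le_left _ _)) μ ν ρ a b ha hb
    have fa := ne_top_of_le_ne_top ENNReal.one_ne_top (ecost_le_one α hα a)
    have fb := ne_top_of_le_ne_top ENNReal.one_ne_top (ecost_le_one β hβ b)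
    calc _ ≤ Wcost (fun x z => ⨅ y, min (α x y + β y z) 1) ω := by
          refine csInf_le ⟨0, ?_⟩ ⟨ω, hω, rfl⟩
          rintro _ ⟨ω, -, rfl⟩
          exact tsum_nonneg fun p => mul_nonneg (hγ _ _).1 ENNReal.toReal_nonneg
      _ ≤ _ := by
          rw [wcost_eq _ hγ, wcost_eq _ hα, wcost_eq _ hβ, ← ENNReal.toReal_add fa fb]
          exact ENNReal.toReal_mono (ENNReal.add_ne_top.2 ⟨fa, fb⟩) hle
  obtain ⟨a0, ha0⟩ := coupling_exists μ ν
  obtain ⟨b0, hb0⟩ := coupling_exists ν ρ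
  rw [← sub_le_iff_le_add]
  refine le_csInf ⟨_, a0, ha0, rfl⟩ ?_
  rintro _ ⟨a, ha, rfl⟩
  rw [sub_le_comm]
  refine le_csInf ⟨_, b0, hb0, rfl⟩ ?_
  rintro _ ⟨b, hb, rfl⟩
  rw [sub_le_iff_le_add']
  exact main a b ha hb
end

section
/- Let X and Y be countable types and α : X → Y → ℝ with values in [0,1]. For all μ ∈ PMF (Option X) and ν ∈ PMF (Option Y): ∑_{x ∈ X} μ(some x) ≤ ∑_{y ∈ Y} ν(some y) + W(α_⊥)(μ, ν). Equivalently, the difference of the probabilities of convergence, ∑_x μ(some x) − ∑_y ν(some y), is bounded by W(α_⊥)(μ, ν). -/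
open scoped ENNReal

/-- The partiality lifting of `α : X → Y → ℝ` to `Option X → Option Y → ℝ`:
`α_⊥(some x, some y) = α x y`, `α_⊥(none, m) = 0`, `α_⊥(some x, none) = 1`. -/
def optLift {X Y : Type*} (α : X → Y → ℝ) : Option X → Option Y → ℝ
  | none, _ => 0
  | some x, some y => α x y
  | some _, none => 1

lemma tsum_option_aux {A : Type*} {f : Option A → ℝ≥0∞} :
    ∑' a, f a = f none + ∑' x : A, f (some x) := by
  rw [← (Equiv.optionEquivSumPUnit.{0} A).symm.tsum_eq f,
    Summable.tsum_sum ENNReal.summable ENNReal.summable]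
  simp [add_comm]

lemma pmf_summable_aux {A : Type*} (μ : PMF A) : Summable fun a => (μ a).toReal :=
  ENNReal.summable_toReal μ.tsum_coe_ne_top

lemma pmf_option_aux {A : Type*} (μ : PMF (Option A)) :
    (∑' x : A, (μ (some x)).toReal) = 1 - (μ none).toReal := by
  have h1 : ∑' a, μ a = μ none + ∑' x : A, μ (some x) := by
    have := tsum_option_aux (f := fun a => μ a)
    simpa using this
  rw [μ.tsum_coe] at h1
  have h2 : ∑' x : A, μ (some x) ≠ ∞ := by
    intro h; simp [h] at h1
  have h3 := congrArg ENNReal.toReal h1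
  rw [ENNReal.toReal_add (μ.apply_ne_top _) h2,
    ENNReal.tsum_toReal_eq (fun a => μ.apply_ne_top _)] at h3
  simp at h3
  linarith

lemma coupling_exists_aux {A B : Type*} (μ : PMF A) (ν : PMF B) :
    ∃ ω, IsCoupling μ ν ω := by
  have hs : ∑' p : A × B, μ p.1 * ν p.2 = 1 := by
    rw [ENNReal.tsum_prod (f := fun a b => μ a * ν b)]
    simp [ENNReal.tsum_mul_left, μ.tsum_coe, ν.tsum_coe]
  refine ⟨⟨fun p => μ p.1 * ν p.2, hs ▸ ENNReal.summable.hasSum⟩, fun x => ?_, fun y => ?_⟩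
  · change ∑' y, μ x * ν y = μ x
    rw [ENNReal.tsum_mul_left, ν.tsum_coe, mul_one]
  · change ∑' x, μ x * ν y = ν y
    rw [ENNReal.tsum_mul_right, μ.tsum_coe, one_mul]

lemma cost_aux {X Y : Type*}
    (α : X → Y → ℝ) (hα : ∀ x y, α x y ∈ Set.Icc (0 : ℝ) 1)
    (μ : PMF (Option X)) (ν : PMF (Option Y)) (ω : PMF (Option X × Option Y))
    (h : IsCoupling μ ν ω) :
    (ν none).toReal ≤ (μ none).toReal + Wcost (optLift α) ω := by
  have hl : ∀ a b, 0 ≤ optLift α a b ∧ optLift α a b ≤ 1 := by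
    rintro (_ | x) (_ | y)
    · simp [optLift]
    · simp [optLift]
    · simp [optLift]
    · exact hα x y
  have hs := pmf_summable_aux ω
  have hc : Summable fun p : Option X × Option Y => optLift α p.1 p.2 * (ω p).toReal :=
    Summable.of_nonneg_of_le (fun p => mul_nonneg (hl _ _).1 ENNReal.toReal_nonneg)
      (fun p => mul_le_of_le_one_left ENNReal.toReal_nonneg (hl _ _).2) hs
  have hinj : Function.Injective fun x : X => ((some x, none) : Option X × Option Y) := by
    intro a b hab; simpa using hab
  have h1 : ∑' x : X, (ω (some x, none)).toReal ≤ Wcost (optLift α) ω := by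
    refine Summable.tsum_le_tsum_of_inj (fun x : X => ((some x, none) : Option X × Option Y)) hinj
      (fun p _ => mul_nonneg (hl _ _).1 ENNReal.toReal_nonneg) (fun x => ?_)
      (hs.comp_injective hinj) hc
    simp [optLift]
  have h2 : (ω (none, none)).toReal ≤ (μ none).toReal := by
    apply ENNReal.toReal_mono (μ.apply_ne_top _)
    rw [← h.1 none]
    exact ENNReal.le_tsum (f := fun y => ω (none, y)) none
  have h3 : ν none = ω (none, none) + ∑' x : X, ω (some x, none) := by
    rw [← h.2 none]
    have := tsum_option_aux (f := fun a => ω (a, none))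
    simpa using this
  have h4 : ∑' x : X, ω (some x, none) ≠ ∞ := by
    intro h; rw [h] at h3; exact ν.apply_ne_top none (by simpa using h3)
  have h5 := congrArg ENNReal.toReal h3
  rw [ENNReal.toReal_add (ω.apply_ne_top _) h4,
    ENNReal.tsum_toReal_eq (fun a => ω.apply_ne_top _)] at h5
  linarith

/-- adequacy of the Wasserstein lifting of the subdistribution monad:
the difference of the probabilities of convergence is bounded by `W(α_⊥)(μ, ν)`. -/
theorem wasserstein_adequacy {X Y : Type*} [Countable X] [Countable Y]
    (α : X → Y → ℝ) (hα : ∀ x y, α x y ∈ Set.Icc (0 : ℝ) 1)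
    (μ : PMF (Option X)) (ν : PMF (Option Y)) :
    (∑' x : X, (μ (some x)).toReal) ≤
      (∑' y : Y, (ν (some y)).toReal) + Wass (optLift α) μ ν := by
  rw [pmf_option_aux, pmf_option_aux]
  have : (ν none).toReal - (μ none).toReal ≤ Wass (optLift α) μ ν := by
    obtain ⟨ω, hω⟩ := coupling_exists_aux μ ν
    refine le_csInf ⟨_, ω, hω, rfl⟩ ?_
    rintro _ ⟨ω', hω', rfl⟩
    have := cost_aux α hα μ ν ω' hω'
    linarith
  linarith
end

section
/- Let V be a commutative integral quantale. For a V-relation α : X ⇸ Y define the Hausdorff lifting Hα : Set X ⇸ Set Y by Hα(A, B) = ⨅_{x ∈ A} ⨆_{y ∈ B} α(x, y). Then H is a V-relator for the powerset functor (whose action on a function f is the image map Set.image f): (1) k ≤ H(id_X)(A, A) for every A ⊆ X; (2) Hβ · Hα ≤ H(β · α) for all α : X ⇸ Y, β : Y ⇸ Z; (3) for every function f : X → Y and A ⊆ X, k ≤ H(graph f)(A, f '' A) and k ≤ H((graph f)°)(f '' A, A); (4) α ≤ β implies Hα ≤ Hβ. -/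
universe u v

/-- The Hausdorff lifting of a `V`-relation: `Hα(A, B) = ⨅_{x ∈ A} ⨆_{y ∈ B} α(x, y)`. -/
def hausdorffLift {V : Type v} [CompleteLattice V] {X Y : Type u}
    (α : X → Y → V) : Set X → Set Y → V :=
  fun A B => ⨅ x ∈ A, ⨆ y ∈ B, α x y

theorem iSup_mul_sort {V : Type v} [CompleteLattice V] [CommMonoid V] [IsQuantale V]
    {ι : Sort*} (f : ι → V) (x : V) : (⨆ i, f i) * x = ⨆ i, f i * x := by
  rw [iSup, sSup_mul_distrib, iSup_range]

/-- the Hausdorff lifting is a `V`-relator for the powerset functor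
(whose action on functions is `Set.image`). -/
theorem hausdorff_vrelator
    {V : Type v} [CompleteLattice V] [CommMonoid V] [IsQuantale V]
    (hint : (1 : V) = ⊤) :
    (∀ (X : Type u) (A : Set X),
      (1 : V) ≤ hausdorffLift (vid (V := V) X) A A) ∧
    (∀ {X Y Z : Type u} (α : X → Y → V) (β : Y → Z → V),
      vcomp (hausdorffLift β) (hausdorffLift α) ≤ hausdorffLift (vcomp β α)) ∧
    (∀ {X Y : Type u} (f : X → Y) (A : Set X),
      (1 : V) ≤ hausdorffLift (vgraph (V := V) f) A (f '' A) ∧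
      (1 : V) ≤ hausdorffLift (vdual (vgraph (V := V) f)) (f '' A) A) ∧
    (∀ {X Y : Type u} (α β : X → Y → V), α ≤ β →
      hausdorffLift α ≤ hausdorffLift β) := by
  refine ⟨?_, ?_, ?_, ?_⟩
  · intro X A
    refine le_iInf₂ fun x hx => le_iSup₂_of_le x hx ?_
    simp [vid]
  · intro X Y Z α β A C
    refine iSup_le fun B => le_iInf₂ fun x hx => ?_
    refine (mul_le_mul_left (show hausdorffLift α A B ≤ ⨆ y ∈ B, α x y from iInf₂_le x hx) _).trans ?_
    rw [iSup_mul_sort]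
    refine iSup_le fun y => ?_
    rw [iSup_mul_sort]
    refine iSup_le fun hy => ?_
    refine (mul_le_mul_right (show hausdorffLift β B C ≤ ⨆ z ∈ C, β y z from iInf₂_le y hy) _).trans ?_
    rw [mul_comm, iSup_mul_sort]
    refine iSup_le fun z => ?_
    rw [iSup_mul_sort]
    refine iSup_le fun hz => ?_
    rw [mul_comm]
    refine le_iSup₂_of_le z hz ?_
    exact le_iSup (fun y => α x y * β y z) y
  · intro X Y f A
    constructor
    · refine le_iInf₂ fun x hx => le_iSup₂_of_le (f x) ⟨x, hx, rfl⟩ ?_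
      simp [vgraph]
    · refine le_iInf₂ fun y hy => ?_
      obtain ⟨x, hx, rfl⟩ := hy
      refine le_iSup₂_of_le x hx ?_
      simp [vdual, vgraph]
  · intro X Y α β h A B
    exact iInf₂_mono fun x _ => iSup₂_mono fun y _ => h x y
end

section
/- Let V be a commutative integral quantale. For a V-relation α : X ⇸ Y define α_⊥ : Option X ⇸ Option Y by α_⊥(some x, some y) = α(x, y), α_⊥(none, m) = k for every m ∈ Option Y, and α_⊥(some x, none) = ⊥. Then (−)_⊥ is a V-relator for the Option functor (whose action on a function f is Option.map f): (1) id_{Option X} ≤ (id_X)_⊥; (2) β_⊥ · α_⊥ ≤ (β · α)_⊥ for all α : X ⇸ Y, β : Y ⇸ Z; (3) Option.map f ≤ (graph f)_⊥ and (Option.map f)° ≤ ((graph f)°)_⊥ for every function f; (4) α ≤ β implies α_⊥ ≤ β_⊥. -/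
universe u v

/-- The partiality lifting of a `V`-relation `α : X ⇸ Y` to `Option X ⇸ Option Y`:
`α_⊥(some x, some y) = α x y`, `α_⊥(none, m) = k = 1`, `α_⊥(some x, none) = ⊥`. -/
def optVLift {V : Type v} [CompleteLattice V] [One V] {X Y : Type u}
    (α : X → Y → V) : Option X → Option Y → V
  | none, _ => 1
  | some x, some y => α x y
  | some _, none => ⊥

/-- the partiality lifting `(−)_⊥` is a `V`-relator for the `Option`
functor (whose action on functions is `Option.map`). -/
theorem optLift_vrelator
    {V : Type v} [CompleteLattice V] [CommMonoid V] [IsQuantale V]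
    (hint : (1 : V) = ⊤) :
    (∀ X : Type u, vid (V := V) (Option X) ≤ optVLift (vid X)) ∧
    (∀ {X Y Z : Type u} (α : X → Y → V) (β : Y → Z → V),
      vcomp (optVLift β) (optVLift α) ≤ optVLift (vcomp β α)) ∧
    (∀ {X Y : Type u} (f : X → Y),
      vgraph (V := V) (Option.map f) ≤ optVLift (vgraph f) ∧
      vdual (vgraph (V := V) (Option.map f)) ≤ optVLift (vdual (vgraph f))) ∧
    (∀ {X Y : Type u} (α β : X → Y → V), α ≤ β → optVLift α ≤ optVLift β) := by
  refine ⟨?_, ?_, ?_, ?_⟩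
  · rintro X (_ | x) (_ | y) <;> simp [vid, optVLift] <;> split_ifs <;> simp_all
  · rintro X Y Z α β (_ | x) (_ | z)
    · simp [optVLift, hint]
    · simp [optVLift, hint]
    · refine iSup_le ?_
      rintro (_ | y)
      · simp [optVLift, Quantale.bot_mul]
      · simp [optVLift, Quantale.mul_bot]
    · refine iSup_le ?_
      rintro (_ | y)
      · simp [optVLift, Quantale.bot_mul]
      · exact le_iSup (fun y => α x y * β y z) y
  · intro X Y f
    constructor
    · rintro (_ | x) (_ | y) <;> simp [vgraph, optVLift, hint] <;> split_ifs <;> simp_all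
    · rintro (_ | y) (_ | x) <;> simp [vgraph, vdual, optVLift, hint] <;> split_ifs <;> simp_all
  · rintro X Y α β h (_ | x) (_ | y)
    · exact le_rfl
    · exact le_rfl
    · exact le_rfl
    · exact h x y
end

section
/- For every real p with 0 < p < 1, the probabilistic choice operation x ⊕_p y := p·x + (1−p)·y makes the unit interval quantale a Σ-quantale: (1) ⊕_p is monotone with respect to the quantale order (i.e. monotone in each argument with respect to the usual order on [0,1]); (2) 0 ⊕_p 0 = 0 (the unit law k ≤ 0 ⊕_p 0); (3) for all a₁, a₂, b₁, b₂ ∈ [0,1], p·min(a₁ + b₁, 1) + (1−p)·min(a₂ + b₂, 1) ≤ min((p·a₁ + (1−p)·a₂) + (p·b₁ + (1−p)·b₂), 1) (the law op(a₁, a₂) ⊗ op(b₁, b₂) ≤ op(a₁ ⊗ b₁, a₂ ⊗ b₂) in the quantale order). -/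
/-- for `0 < p < 1`, probabilistic choice `x ⊕_p y = p·x + (1−p)·y` is a
Σ-quantale operation on the unit interval quantale (`[0,1]` with the reversed order,
truncated addition as multiplication and `0` as unit): it is monotone in each argument
(with respect to the usual order on `[0,1]`), satisfies the unit law `0 ⊕_p 0 = 0`, and
the lax distribution law over truncated addition. -/
theorem prob_choice_sigma_quantale (p : ℝ) (hp : 0 < p) (hp1 : p < 1) :
    (∀ a a' b b' : ℝ, a ∈ Set.Icc (0 : ℝ) 1 → a' ∈ Set.Icc (0 : ℝ) 1 →
      b ∈ Set.Icc (0 : ℝ) 1 → b' ∈ Set.Icc (0 : ℝ) 1 →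
      a ≤ a' → b ≤ b' → p * a + (1 - p) * b ≤ p * a' + (1 - p) * b') ∧
    (p * 0 + (1 - p) * 0 = 0) ∧
    (∀ a₁ a₂ b₁ b₂ : ℝ, a₁ ∈ Set.Icc (0 : ℝ) 1 → a₂ ∈ Set.Icc (0 : ℝ) 1 →
      b₁ ∈ Set.Icc (0 : ℝ) 1 → b₂ ∈ Set.Icc (0 : ℝ) 1 →
      p * min (a₁ + b₁) 1 + (1 - p) * min (a₂ + b₂) 1 ≤
        min ((p * a₁ + (1 - p) * a₂) + (p * b₁ + (1 - p) * b₂)) 1) := by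
  have hq : 0 ≤ 1 - p := by linarith
  have mono : ∀ a a' b b' : ℝ, a ≤ a' → b ≤ b' →
      p * a + (1 - p) * b ≤ p * a' + (1 - p) * b' := fun a a' b b' h1 h2 =>
    add_le_add (mul_le_mul_of_nonneg_left h1 hp.le) (mul_le_mul_of_nonneg_left h2 hq)
  refine ⟨fun a a' b b' _ _ _ _ h1 h2 => mono a a' b b' h1 h2, by ring, ?_⟩
  intro a₁ a₂ b₁ b₂ _ _ _ _
  apply le_min
  · have := mono _ _ _ _ (min_le_left (a₁ + b₁) 1) (min_le_left (a₂ + b₂) 1)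
    linarith
  · have := mono _ _ _ _ (min_le_right (a₁ + b₁) 1) (min_le_right (a₂ + b₂) 1)
    linarith
end
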